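/- Let y : ℕ → ℝ be a finitely supported sequence. Then ∑_{k=n}^∞ \binom{k}{n}(-1)^k y_k = y_n holds for every n if and only if there exists a finitely supported sequence b : ℕ → ℝ such that y_n = ∑_{j} b_j \binom{j}{n-j} for every n (the inner sum is finite, running over ⌈n/2⌉ ≤ j ≤ n). In other words, the finitely supported invariant sequences of the second kind are exactly the finite linear combinations of the columns of the matrix P^{T↓}, whose j-th column has entries \binom{j}{n-j}. -/

import Mathlib

/-!
Encode a finitely supported sequence `y` as the polynomial `p = ∑ y_k X^k`. The alternating
binomial transform of `y` is the coefficient sequence of `p(-1 - X)`, and a combination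
`∑ b_j * choose j (n - j)` is the `n`-th coefficient of `q(X(X + 1))` with `q = ∑ b_j X^j`. So the
claim is that the polynomials fixed by the reflection `X ↦ -1 - X` are the polynomials in the fixed
element `X(X + 1)`. A fixed `p` takes the same value at `0` and `-1`, hence
`p = X(X + 1) * r + p(0)` with `r` again fixed and of smaller degree.
-/

section

open Polynomial
open scoped nonZeroDivisors

section Coefficients

theorem finite_support_iff_exists_coeff_eq {R : Type*} [Semiring R] {y : ℕ → R} :
    (Function.support y).Finite ↔ ∃ p : R[X], p.coeff = y := by
  constructor
  · intro hy
    exact ⟨⟨.ofCoeff (Finsupp.ofSupportFinite y hy)⟩, rfl⟩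
  · rintro ⟨p, rfl⟩
    exact p.support.finite_toSet.subset fun k hk => mem_support_iff.mpr hk

theorem coeff_comp_eq_finsum {R : Type*} [Semiring R] (p q : R[X]) (n : ℕ) :
    (p.comp q).coeff n = ∑ᶠ k, p.coeff k * (q ^ k).coeff n := by
  rw [finsum_eq_sum_of_support_subset (s := p.support)]
  · simp only [comp, eval₂_eq_sum, sum_def, finsetSum_coeff, coeff_C_mul]
  · exact fun k hk => mem_support_iff.mpr (left_ne_zero_of_mul hk)

theorem coeff_comp_neg_one_sub_X {R : Type*} [CommRing R] (p : R[X]) (n : ℕ) :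
    (p.comp (-1 - X)).coeff n = ∑ᶠ k, (Nat.choose k n : R) * (-1) ^ k * p.coeff k := by
  have coeff_pow (k : ℕ) : ((-1 - X : R[X]) ^ k).coeff n = (-1) ^ k * (Nat.choose k n : R) := by
    have factor : (-1 - X : R[X]) = C (-1) * (X + 1) := by
      rw [C_neg, C_1]
      ring
    rw [factor, mul_pow, ← C_pow, coeff_C_mul, coeff_X_add_one_pow]
  rw [coeff_comp_eq_finsum]
  refine finsum_congr fun k => ?_
  rw [coeff_pow]
  ring

theorem coeff_comp_X_mul_X_add_one {R : Type*} [CommSemiring R] (q : R[X]) (n : ℕ) :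
    (q.comp (X * (X + 1))).coeff n =
      ∑ j ∈ Finset.range (n + 1), q.coeff j * (Nat.choose j (n - j) : R) := by
  have coeff_pow (j : ℕ) : ((X * (X + 1) : R[X]) ^ j).coeff n =
      if j ≤ n then (Nat.choose j (n - j) : R) else 0 := by
    rw [mul_pow, coeff_X_pow_mul', coeff_X_add_one_pow]
  simp only [coeff_comp_eq_finsum, coeff_pow]
  rw [finsum_eq_sum_of_support_subset (s := Finset.range (n + 1))]
  · refine Finset.sum_congr rfl fun j hj => ?_
    rw [if_pos (Finset.mem_range_succ_iff.mp hj)]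
  · refine Function.support_subset_iff'.mpr fun j hj => ?_
    rw [if_neg fun hjn => hj (Finset.mem_coe.mpr (Finset.mem_range_succ_iff.mpr hjn)), mul_zero]

end Coefficients

section Reflection

variable {R : Type*} [CommRing R] {c : R} {p : R[X]}

theorem X_mul_X_sub_C_dvd_sub_C_eval_zero (hc : c ∈ R⁰) (hp : p.eval c = p.eval 0) :
    X * (X - C c) ∣ p - C (p.eval 0) := by
  have decomp : p - C (p.eval 0) = X * p.divX := by
    rw [← coeff_zero_eq_eval_zero, sub_eq_iff_eq_add, X_mul_divX_add]
  have root : p.divX.IsRoot c := by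
    have := congrArg (eval c) decomp
    rw [eval_sub, eval_C, hp, sub_self, eval_mul, eval_X] at this
    exact hc.1 _ this.symm
  rw [decomp]
  exact mul_dvd_mul_left X (dvd_iff_isRoot.mpr root)

theorem X_mul_X_sub_C_comp_C_sub_X (c : R) :
    (X * (X - C c)).comp (C c - X) = X * (X - C c) := by
  simp only [mul_comp, sub_comp, X_comp, C_comp]
  ring

theorem exists_eq_X_mul_X_sub_C_mul_add_C (hc : c ∈ R⁰) (hp : p.comp (C c - X) = p) :
    ∃ r : R[X], r.comp (C c - X) = r ∧ p = X * (X - C c) * r + C (p.eval 0) := by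
  have eval_eq : p.eval c = p.eval 0 := by
    conv_rhs => rw [← hp]
    simp [eval_comp]
  obtain ⟨r, hr⟩ := X_mul_X_sub_C_dvd_sub_C_eval_zero hc eval_eq
  refine ⟨r, ?_, sub_eq_iff_eq_add.mp hr⟩
  apply (monic_X.mul (monic_X_sub_C c)).isRegular.left
  calc X * (X - C c) * r.comp (C c - X)
    _ = (X * (X - C c) * r).comp (C c - X) := by rw [mul_comp, X_mul_X_sub_C_comp_C_sub_X]
    _ = X * (X - C c) * r := by rw [← hr, sub_comp, hp, C_comp]

theorem natDegree_lt_natDegree_X_mul_X_sub_C_mul_add_C (c a : R) {r : R[X]} (hr : r ≠ 0) :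
    r.natDegree < (X * (X - C c) * r + C a).natDegree := by
  have := Nontrivial.of_polynomial_ne hr
  rw [natDegree_add_C, (monic_X.mul (monic_X_sub_C c)).natDegree_mul' hr,
    monic_X.natDegree_mul (monic_X_sub_C c), natDegree_X, natDegree_X_sub_C]
  lia

theorem exists_eq_comp_X_mul_X_sub_C (hc : c ∈ R⁰) (hp : p.comp (C c - X) = p) :
    ∃ q : R[X], p = q.comp (X * (X - C c)) := by
  induction hd : p.natDegree using Nat.strong_induction_on generalizing p with
  | h d ih =>
    obtain ⟨r, hr, hpr⟩ := exists_eq_X_mul_X_sub_C_mul_add_C hc hp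
    rcases eq_or_ne r 0 with rfl | hr0
    · exact ⟨C (p.eval 0), by rwa [mul_zero, zero_add, ← C_comp] at hpr⟩
    · have natDegree_lt : r.natDegree < d := by
        rw [← hd, hpr]
        exact natDegree_lt_natDegree_X_mul_X_sub_C_mul_add_C c _ hr0
      obtain ⟨q, hq⟩ := ih _ natDegree_lt hr rfl
      refine ⟨X * q + C (p.eval 0), ?_⟩
      rwa [add_comp, mul_comp, X_comp, C_comp, ← hq]

theorem comp_C_sub_X_eq_self_iff (hc : c ∈ R⁰) :
    p.comp (C c - X) = p ↔ ∃ q : R[X], p = q.comp (X * (X - C c)) := by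
  refine ⟨exists_eq_comp_X_mul_X_sub_C hc, ?_⟩
  rintro ⟨q, rfl⟩
  rw [comp_assoc, X_mul_X_sub_C_comp_C_sub_X]

theorem comp_neg_one_sub_X_eq_self_iff :
    p.comp (-1 - X) = p ↔ ∃ q : R[X], p = q.comp (X * (X + 1)) := by
  simpa using comp_C_sub_X_eq_self_iff (p := p) (isUnit_one (M := R)).neg.mem_nonZeroDivisors

end Reflection

theorem stmt6_general {R : Type*} [CommRing R] (y : ℕ → R) (hy : (Function.support y).Finite) :
    (∀ n, ∑ᶠ k, (Nat.choose k n : R) * (-1) ^ k * y k = y n) ↔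
    (∃ b : ℕ → R, (Function.support b).Finite ∧
      ∀ n, y n = ∑ j ∈ Finset.range (n + 1), b j * (Nat.choose j (n - j) : R)) := by
  obtain ⟨p, rfl⟩ := finite_support_iff_exists_coeff_eq.mp hy
  calc (∀ n, ∑ᶠ k, (Nat.choose k n : R) * (-1) ^ k * p.coeff k = p.coeff n)
    _ ↔ p.comp (-1 - X) = p := by simp only [Polynomial.ext_iff, coeff_comp_neg_one_sub_X]
    _ ↔ ∃ q : R[X], p = q.comp (X * (X + 1)) := comp_neg_one_sub_X_eq_self_iff
    _ ↔ ∃ q : R[X], ∀ n,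
        p.coeff n = ∑ j ∈ Finset.range (n + 1), q.coeff j * (Nat.choose j (n - j) : R) := by
      simp only [Polynomial.ext_iff, coeff_comp_X_mul_X_add_one]
    _ ↔ _ := by simp only [finite_support_iff_exists_coeff_eq, exists_exists_eq_and]

end

/-- the finitely supported invariant sequences of the second kind are
exactly the finite linear combinations of the columns of `P^{T↓}`, whose `j`-th
column has entries `choose j (n - j)` (which vanish unless `⌈n/2⌉ ≤ j ≤ n`). -/
theorem stmt6 (y : ℕ → ℝ) (hy : (Function.support y).Finite) :
    (∀ n, ∑ᶠ k, (Nat.choose k n : ℝ) * (-1) ^ k * y k = y n) ↔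
    (∃ b : ℕ → ℝ, (Function.support b).Finite ∧
      ∀ n, y n = ∑ j ∈ Finset.range (n + 1), b j * (Nat.choose j (n - j) : ℝ)) :=
  stmt6_general y hy
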